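/- arXiv:1812.01413 — 2 statements merged into one kernel-verified Lean document; each statement's English description precedes it below -/
import Mathlib

section
/- Let G(q) be the Monge metric of the Oriented Associativity equation, φ the coordinate change from u- to q-variables, J(u) the Jacobian matrix ∂φ/∂u, Δ(u) = (u¹−u²)(u¹−u³)(u²−u³)u⁵, and let w_{1ij}(u) = W_{1ij}(u)/Δ(u) and w_{2ij}(u) = W_{2ij}(u)/Δ(u) be the two explicit skew-symmetric 6×6 matrices of lowered commuting-flow tensors. On the open set of u ∈ ℝ⁶ where u¹, u², u³ are pairwise distinct, u⁵ ≠ 0, J(u) is invertible and G(φ(u)) is invertible, define g^{sp} := entries of G(φ(u))⁻¹, c_{pij}(q) := (1/3)(∂G_{jp}/∂q^i − ∂G_{ip}/∂q^j), c^s_{ij} := Σ_p g^{sp} c_{pij}(φ(u)), and define the q-derivative of w by w_{αij,l} := Σ_s (∂w_{αij}/∂u^s)(J(u)⁻¹)^s_l. Then for α = 1, 2 and all indices i, j, l ∈ {1,…,6}: w_{αij,l} − Σ_s c^s_{ij} w_{αsl} = 0. -/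
/-- Partial derivative in direction `k` for functions on `ℝ⁶`. -/
noncomputable def pd (k : Fin 6) (f : (Fin 6 → ℝ) → ℝ) (x : Fin 6 → ℝ) : ℝ :=
  fderiv ℝ f x (Pi.single k 1)

/-- The Monge metric `G(q)` of the Oriented Associativity equation
(0-based indices: `q i = qⁱ⁺¹`). -/
def G (q : Fin 6 → ℝ) : Matrix (Fin 6) (Fin 6) ℝ :=
  !![2, 0, q 2, -q 4, 2 * q 3, 0;
     0, 0, 2 * q 4, 0, -q 2 + 2 * q 5, -q 4;
     q 2, 2 * q 4, -2 * (q 0 + q 3 * q 4), q 4 * (q 2 - q 5),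
       -q 1 + q 3 * (q 2 - q 5), 2 * q 3 * q 4;
     -q 4, 0, q 4 * (q 2 - q 5), 2 * (q 4) ^ 2,
       -q 0 + q 2 * (-q 2 + 2 * q 5) - 2 * q 3 * q 4 - (q 5) ^ 2, q 4 * (-q 2 + q 5);
     2 * q 3, -q 2 + 2 * q 5, -q 1 + q 3 * (q 2 - q 5),
       -q 0 + q 2 * (-q 2 + 2 * q 5) - 2 * q 3 * q 4 - (q 5) ^ 2, 2 * (q 3) ^ 2,
       -q 1 + q 3 * (-q 2 + q 5);
     0, -q 4, 2 * q 3 * q 4, q 4 * (-q 2 + q 5), -q 1 + q 3 * (-q 2 + q 5),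
       -2 * q 3 * q 4]

/-- The coordinate change `φ : (u¹,…,u⁶) ↦ (q¹,…,q⁶)` (0-based indices: `x i = uⁱ⁺¹`). -/
noncomputable def phi (x : Fin 6 → ℝ) : Fin 6 → ℝ :=
  let q1 : ℝ := (1 / 4) * (x 0 + x 1 + x 2) ^ 2 - (x 0 * x 1 + x 0 * x 2 + x 1 * x 2)
    - (1 / 4) * (x 5) ^ 2 - x 3 * x 4
  ![q1,
    (2 * x 0 * x 1 * x 2 + (x 0 + x 1 + x 2 - x 5) * q1) / (2 * x 4),
    (1 / 2) * (x 0 + x 1 + x 2 + x 5),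
    x 3,
    x 4,
    (1 / 2) * (x 0 + x 1 + x 2 - x 5)]

/-- The Jacobian matrix `J(u) = ∂φ/∂u`. -/
noncomputable def Jmat (u : Fin 6 → ℝ) : Matrix (Fin 6) (Fin 6) ℝ :=
  Matrix.of fun i j => pd j (fun x => phi x i) u

/-- `Δ(u) = (u¹−u²)(u¹−u³)(u²−u³)u⁵`. -/
def Δ (u : Fin 6 → ℝ) : ℝ := (u 0 - u 1) * (u 0 - u 2) * (u 1 - u 2) * u 4

/-- The first skew-symmetric matrix `W₁(u)` of lowered commuting-flow tensors. -/
noncomputable def W1 (u : Fin 6 → ℝ) : Matrix (Fin 6) (Fin 6) ℝ :=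
  let a13 : ℝ := -(u 1 + u 2 - u 0 - u 5) * (u 1 - u 2) * u 4 / 2
  let a14 : ℝ := (u 1 - u 2) * (u 4) ^ 2
  let a25 : ℝ := -(u 1 + u 2 - u 0 - u 5) * (u 1 - u 2) * u 4 / 2
  let a26 : ℝ := (u 1 - u 2) * (u 4) ^ 2
  let a34 : ℝ := (u 1 - u 2) * (u 4) ^ 2 * u 0
  let a35 : ℝ := -(4 * u 3 * u 4 + (u 5) ^ 2 - 2 * u 5 * u 0 + (u 0) ^ 2 - (u 1) ^ 2
      + 2 * u 1 * u 2 - (u 2) ^ 2) * (u 5 + u 0 - u 1 - u 2) * (u 1 - u 2) / 8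
  let a45 : ℝ := -(4 * u 3 * u 4 + (u 5) ^ 2 - 4 * u 5 * u 0 - (u 0) ^ 2 + 2 * u 0 * u 1
      + 2 * u 0 * u 2 - (u 1) ^ 2 + 2 * u 1 * u 2 - (u 2) ^ 2) * (u 1 - u 2) * u 4 / 4
  let a46 : ℝ := (u 1 - u 2) * (u 4) ^ 2 * u 0
  let a56 : ℝ := -(4 * u 3 * u 4 + (u 5) ^ 2 - 2 * u 5 * u 0 + (u 0) ^ 2 - (u 1) ^ 2
      + 2 * u 1 * u 2 - (u 2) ^ 2) * (u 5 + u 0 - u 1 - u 2) * (u 1 - u 2) / 8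
  !![0, 0, a13, a14, 0, 0;
     0, 0, 0, 0, a25, a26;
     -a13, 0, 0, a34, a35, 0;
     -a14, 0, -a34, 0, a45, a46;
     0, -a25, -a35, -a45, 0, a56;
     0, -a26, 0, -a46, -a56, 0]

/-- The second skew-symmetric matrix `W₂(u)` of lowered commuting-flow tensors. -/
noncomputable def W2 (u : Fin 6 → ℝ) : Matrix (Fin 6) (Fin 6) ℝ :=
  let a13 : ℝ := -(u 5 - u 0 + u 1 - u 2) * (u 0 - u 2) * u 4 / 2
  let a14 : ℝ := -(u 0 - u 2) * (u 4) ^ 2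
  let a25 : ℝ := -(u 5 - u 0 + u 1 - u 2) * (u 0 - u 2) * u 4 / 2
  let a26 : ℝ := -(u 0 - u 2) * (u 4) ^ 2
  let a34 : ℝ := -(u 0 - u 2) * (u 4) ^ 2 * u 1
  let a35 : ℝ := (4 * u 3 * u 4 + (u 5) ^ 2 - 2 * u 5 * u 1 - (u 0) ^ 2 + 2 * u 0 * u 2
      + (u 1) ^ 2 - (u 2) ^ 2) * (u 5 - u 0 + u 1 - u 2) * (u 0 - u 2) / 8
  let a45 : ℝ := -((u 1 - u 2) ^ 2 + (u 0) ^ 2 - 2 * (u 1 + u 2) * u 0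
      - (u 5 - 4 * u 1) * u 5 - 4 * u 3 * u 4) * (u 0 - u 2) * u 4 / 4
  let a46 : ℝ := -(u 0 - u 2) * (u 4) ^ 2 * u 1
  let a56 : ℝ := (4 * u 3 * u 4 + (u 5) ^ 2 - 2 * u 5 * u 1 - (u 0) ^ 2 + 2 * u 0 * u 2
      + (u 1) ^ 2 - (u 2) ^ 2) * (u 5 - u 0 + u 1 - u 2) * (u 0 - u 2) / 8
  !![0, 0, a13, a14, 0, 0;
     0, 0, 0, 0, a25, a26;
     -a13, 0, 0, a34, a35, 0;
     -a14, 0, -a34, 0, a45, a46;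
     0, -a25, -a35, -a45, 0, a56;
     0, -a26, 0, -a46, -a56, 0]

/-- The pair of matrices `W₁, W₂`. -/
noncomputable def Wmat : Fin 2 → (Fin 6 → ℝ) → Matrix (Fin 6) (Fin 6) ℝ := ![W1, W2]

/-- The lowered symbols `c_{pij}(q) = (1/3)(∂G_{jp}/∂q^i − ∂G_{ip}/∂q^j)`. -/
noncomputable def cLow (p i j : Fin 6) (q : Fin 6 → ℝ) : ℝ :=
  (1 / 3) * (pd i (fun x => G x j p) q - pd j (fun x => G x i p) q)

open Matrix Filter Topology

/-!
Write `M(q)` for the matrix of multiplication by the second basis element in the associative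
algebra with structure constants `q`. In the coordinates `u` its eigenvalues are `u¹, u², u³`, and
`w_α` is linear in the spectral projector of `M(φ(u))` for the eigenvalue `u^α`. The symbols
`c_{p··}` lie in the same five-dimensional space of skew-symmetric matrices as `w_α`, so the claim
`dw = Σ_s c^s (w dq)_s` says that `dw = Σ_p y^p c_{p··}` for the vector `y = G⁻¹ w dq`, which is
the velocity of `q` under the flow defined by `w`. Differentiating the eigenvector equations of
`M(q)` produces a vector `y` with `Σ_p y^p c_{p··} = dw`, and the same equations show that
`G y = w dq`.
-/

/-- The five-dimensional space of skew-symmetric matrices to which both the lowered symbols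
`c_{p··}` and the lowered flow tensors `w_{α··}` belong, in coordinates. -/
def skewForm : (Fin 5 → ℝ) →ₗ[ℝ] Matrix (Fin 6) (Fin 6) ℝ where
  toFun z :=
    !![0, 0, z 3, z 4, 0, 0;
       0, 0, 0, 0, z 3, z 4;
       -z 3, 0, 0, z 2, z 1, 0;
       -z 4, 0, -z 2, 0, z 0, z 2;
       0, -z 3, -z 1, -z 0, 0, z 1;
       0, -z 4, 0, -z 2, -z 1, 0]
  map_add' z z' := by
    ext i j; fin_cases i <;> fin_cases j <;> simp [add_comm]
  map_smul' c z := by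
    ext i j; fin_cases i <;> fin_cases j <;> simp

/-- The matrix whose row `p` lists the `skewForm` coordinates of the lowered symbols
`c_{p··}(q)`. -/
def symbolCoord (q : Fin 6 → ℝ) : Matrix (Fin 6) (Fin 5) ℝ :=
  !![1, 0, 0, 0, 0;
     0, -1, 0, 0, 0;
     0, q 3, q 4, -1, 0;
     -2 * q 4, q 5 - q 2, 0, 0, 0;
     2 * q 3, 0, q 5 - q 2, 0, -1;
     0, -q 3, -q 4, 0, 0]

theorem G_apply_add_smul (q v : Fin 6 → ℝ) (t : ℝ) (i j : Fin 6) :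
    G (q + t • v) i j = G q i j + t * ((G (q + v) i j - G (q - v) i j) / 2) +
      t ^ 2 * ((G (q + v) i j + G (q - v) i j) / 2 - G q i j) := by
  fin_cases i <;> fin_cases j <;> simp [G] <;> ring

theorem differentiable_G_apply (i j : Fin 6) : Differentiable ℝ fun q => G q i j := by
  fin_cases i <;> fin_cases j <;> simp only [G, of_apply, cons_val', cons_val,
    Fin.zero_eta, Fin.mk_one, Fin.reduceFinMk, cons_val_zero, cons_val_one, cons_val_fin_one] <;>
    fun_prop

-- `G` is quadratic, so symmetric difference quotients compute its derivative exactly.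
theorem pd_G_apply (k i j : Fin 6) (q : Fin 6 → ℝ) :
    pd k (fun x => G x i j) q =
      (G (q + Pi.single k 1) i j - G (q - Pi.single k 1) i j) / 2 := by
  have h : HasLineDerivAt ℝ (fun x => G x i j)
      ((G (q + Pi.single k 1) i j - G (q - Pi.single k 1) i j) / 2) q (Pi.single k 1) := by
    refine HasDerivAt.congr_of_eventuallyEq ?_
      (.of_forall fun t => G_apply_add_smul q (Pi.single k 1) t i j)
    exact ((((hasDerivAt_id (0 : ℝ)).mul_const _).const_add _).add
      ((hasDerivAt_pow 2 (0 : ℝ)).mul_const _)).congr_deriv (by simp)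
  rw [pd, ← (differentiable_G_apply i j q).lineDeriv_eq_fderiv, h.lineDeriv]

theorem vecMul_G_sub_vecMul_G (q v w : Fin 6 → ℝ) (p : Fin 6) :
    (w ᵥ* (G (q + v) - G (q - v)) - v ᵥ* (G (q + w) - G (q - w))) p =
      6 * (v ⬝ᵥ skewForm (symbolCoord q p) *ᵥ w) := by
  fin_cases p <;>
    simp [G, skewForm, symbolCoord, mulVec, dotProduct, vecHead, vecTail,
      Fin.sum_univ_six] <;> ring

theorem cLow_eq_skewForm (p i j : Fin 6) (q : Fin 6 → ℝ) :
    cLow p i j q = skewForm (symbolCoord q p) i j := by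
  have h := vecMul_G_sub_vecMul_G q (Pi.single i 1) (Pi.single j 1) p
  simp only [Pi.sub_apply, single_one_vecMul, single_one_dotProduct, mulVec_single_one,
    row_apply, col_apply, Matrix.sub_apply] at h
  rw [cLow, pd_G_apply, pd_G_apply]
  linarith

/-- The symbols `c^s_{ij} = Σ_p g^{sp} c_{pij}` as a vector indexed by `s`. -/
noncomputable def cUp (i j : Fin 6) (q : Fin 6 → ℝ) : Fin 6 → ℝ :=
  fun s => ∑ p, (G q)⁻¹ s p * cLow p i j q

section Eigenpairs

/-- Multiplication by `e₂` in the algebra with unit `e₁` and products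
`e₂e₂ = q¹e₁ + q³e₂ + q⁵e₃`, `e₂e₃ = q²e₁ + q⁴e₂ + q⁶e₃`. -/
def multMatrix (q : Fin 6 → ℝ) : Matrix (Fin 3) (Fin 3) ℝ :=
  !![0, q 0, q 1; 1, q 2, q 3; 0, q 4, q 5]

/-- `(1, θ, η)` is a left eigenvector of `multMatrix q` with eigenvalue `θ`; the first column of
`multMatrix q` forces the eigenvalue and the second component to agree. -/
def IsEigenpair (q : Fin 6 → ℝ) (θ η : ℝ) : Prop :=
  ![1, θ, η] ᵥ* multMatrix q = θ • ![1, θ, η]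

theorem isEigenpair_iff {q : Fin 6 → ℝ} {θ η : ℝ} :
    IsEigenpair q θ η ↔
      q 0 = θ ^ 2 - θ * q 2 - η * q 4 ∧ q 1 = θ * η - θ * q 3 - η * q 5 := by
  have h : ![1, θ, η] ᵥ* multMatrix q =
      ![θ, q 0 + θ * q 2 + η * q 4, q 1 + θ * q 3 + η * q 5] := by
    simp [multMatrix, vecMul_cons, vecHead, vecTail, add_assoc]
  rw [IsEigenpair, h]
  simp only [smul_cons, smul_eq_mul, mul_one, smul_empty, vecCons_inj, true_and, and_true]
  constructor <;> rintro ⟨h₀, h₁⟩ <;> constructor <;> linarith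

/-- The direction `(q', θ', η')` satisfies at `(q, θ, η)` the linearization of the eigenvector
equations in `isEigenpair_iff`. -/
def IsEigenpairTangent (q q' : Fin 6 → ℝ) (θ θ' η η' : ℝ) : Prop :=
  q' 0 = -θ * q' 2 - η * q' 4 + θ' * (2 * θ - q 2) - η' * q 4 ∧
    q' 1 = -θ * q' 3 - η * q' 5 + θ' * (η - q 3) + η' * (θ - q 5)

/-- The pairing of the left eigenvector `(1, θ, η)` of `multMatrix q` with a right eigenvector for
`θ`; it is the derivative of the characteristic polynomial at `θ`. -/
def eigenPairing (q : Fin 6 → ℝ) (θ η : ℝ) : ℝ :=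
  ![1, θ, η] ⬝ᵥ ![(θ - q 2) * (θ - q 5) - q 3 * q 4, θ - q 5, q 4]

/-- The derivative of `eigenPairing` at `(q, θ, η)` in the direction `(q', θ', η')`. -/
def eigenPairingDeriv (q q' : Fin 6 → ℝ) (θ θ' η η' : ℝ) : ℝ :=
  (2 * θ' - q' 2) * (θ - q 5) + (2 * θ - q 2) * (θ' - q' 5) + q 4 * (η' - q' 3) +
    q' 4 * (η - q 3)

/-- The combinations `Π₂₂ - Π₃₃, -Π₂₃, Π₃₂, Π₂₁, Π₃₁` of the entries of the spectral projector `Π`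
of `multMatrix q` for the eigenvalue `θ` with left eigenvector `(1, θ, η)`. They are the
`skewForm` coordinates of the flow tensors. -/
noncomputable def projCoord (q : Fin 6 → ℝ) (θ η : ℝ) : Fin 5 → ℝ :=
  (eigenPairing q θ η)⁻¹ •
    ![θ * (θ - q 5) - η * q 4, -η * (θ - q 5), θ * q 4, θ - q 5, q 4]

/-- The derivative of `projCoord` at `(q, θ, η)` in the direction `(q', θ', η')`. -/
noncomputable def projCoordDeriv (q q' : Fin 6 → ℝ) (θ θ' η η' : ℝ) : Fin 5 → ℝ :=
  (eigenPairing q θ η)⁻¹ •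
    (![θ' * (θ - q 5) + θ * (θ' - q' 5) - (η' * q 4 + η * q' 4),
      -η' * (θ - q 5) - η * (θ' - q' 5), θ' * q 4 + θ * q' 4, θ' - q' 5, q' 4]
      - eigenPairingDeriv q q' θ θ' η η' • projCoord q θ η)

variable {q : ℝ → Fin 6 → ℝ} {θ η : ℝ → ℝ} {q' : Fin 6 → ℝ} {θ' η' t : ℝ}

theorem hasDerivAt_eigenPairing (hq : HasDerivAt q q' t) (hθ : HasDerivAt θ θ' t)
    (hη : HasDerivAt η η' t) :
    HasDerivAt (fun s => eigenPairing (q s) (θ s) (η s))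
      (eigenPairingDeriv (q t) q' (θ t) θ' (η t) η') t := by
  have hq := hasDerivAt_pi.1 hq
  simp only [eigenPairing, dotProduct, Fin.sum_univ_three, cons_val]
  refine HasDerivAt.congr_deriv ((((((hθ.sub (hq 2)).mul (hθ.sub (hq 5))).sub
    ((hq 3).mul (hq 4))).const_mul 1).add (hθ.mul (hθ.sub (hq 5)))).add (hη.mul (hq 4))) ?_
  simp [eigenPairingDeriv]; ring

theorem hasDerivAt_projCoord (hq : HasDerivAt q q' t) (hθ : HasDerivAt θ θ' t)
    (hη : HasDerivAt η η' t) (hp : eigenPairing (q t) (θ t) (η t) ≠ 0) :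
    HasDerivAt (fun s => projCoord (q s) (θ s) (η s))
      (projCoordDeriv (q t) q' (θ t) θ' (η t) η') t := by
  have hq_apply := hasDerivAt_pi.1 hq
  have hx := hθ.sub (hq_apply 5)
  have hy := hq_apply 4
  have hN : HasDerivAt (fun s => ![θ s * (θ s - q s 5) - η s * q s 4, -η s * (θ s - q s 5),
      θ s * q s 4, θ s - q s 5, q s 4]) _ t :=
    .finCons ((hθ.mul hx).sub (hη.mul hy)) <| .finCons (hη.neg.mul hx) <|
      .finCons (hθ.mul hy) <| .finCons hx <| .finCons hy <| hasDerivAt_const _ _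
  refine HasDerivAt.congr_deriv (((hasDerivAt_eigenPairing hq hθ hη).inv hp).smul hN) ?_
  ext m
  fin_cases m <;> simp [projCoordDeriv, projCoord] <;> field_simp <;> ring

theorem isEigenpairTangent_of_hasDerivAt (h : ∀ᶠ s in 𝓝 t, IsEigenpair (q s) (θ s) (η s))
    (hq : HasDerivAt q q' t) (hθ : HasDerivAt θ θ' t) (hη : HasDerivAt η η' t) :
    IsEigenpairTangent (q t) q' (θ t) θ' (η t) η' := by
  have hq := hasDerivAt_pi.1 hq
  have h₀ := (((hθ.pow 2).sub (hθ.mul (hq 2))).sub (hη.mul (hq 4))).congr_of_eventuallyEq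
    (h.mono fun s hs => (isEigenpair_iff.1 hs).1)
  have h₁ := (((hθ.mul hη).sub (hθ.mul (hq 3))).sub (hη.mul (hq 5))).congr_of_eventuallyEq
    (h.mono fun s hs => (isEigenpair_iff.1 hs).2)
  constructor
  · rw [(hq 0).unique h₀]; simp; ring
  · rw [(hq 1).unique h₁]; ring

end Eigenpairs

section Flow

/-- The velocity `G⁻¹ w q'` of the flow defined by the tensor `w = skewForm z` at a point moving
with velocity `q'`, where `z'` is the derivative of `z`. It is the solution `y` of
`y ᵥ* symbolCoord q = z'` whose fourth entry `y₃` is chosen so that the first components of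
`y ᵥ* G q` and `w *ᵥ q'` agree. -/
noncomputable def flowVelocity (q q' : Fin 6 → ℝ) (z z' : Fin 5 → ℝ) : Fin 6 → ℝ :=
  let y₃ := (q' 2 * z 3 + q' 3 * z 4 - 2 * z' 0 + q 2 * z' 3 - 2 * q 3 * z' 4) / (3 * q 4)
  let y₅ := -z' 3 - (z' 2 + (q 5 - q 2) * z' 4) / q 4
  ![z' 0 + 2 * q 3 * z' 4 + 2 * q 4 * y₃, -z' 1 - q 3 * (z' 3 + y₅) + (q 5 - q 2) * y₃,
    -z' 3, y₃, -z' 4, y₅]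

theorem flowVelocity_vecMul_symbolCoord {q : Fin 6 → ℝ} (q' : Fin 6 → ℝ) (z z' : Fin 5 → ℝ)
    (hq : q 4 ≠ 0) : flowVelocity q q' z z' ᵥ* symbolCoord q = z' := by
  ext m
  fin_cases m <;> simp [flowVelocity, symbolCoord, vecMul, dotProduct, Fin.sum_univ_six] <;>
    field_simp <;> ring

theorem flowVelocity_vecMul_G {q q' : Fin 6 → ℝ} {θ θ' η η' : ℝ} (h : IsEigenpair q θ η)
    (h' : IsEigenpairTangent q q' θ θ' η η') (hq : q 4 ≠ 0) (hp : eigenPairing q θ η ≠ 0) :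
    flowVelocity q q' (projCoord q θ η) (projCoordDeriv q q' θ θ' η η') ᵥ* G q =
      skewForm (projCoord q θ η) *ᵥ q' := by
  obtain ⟨hq₀, hq₁⟩ := isEigenpair_iff.1 h
  obtain ⟨hq₀', hq₁'⟩ := h'
  have hp_eq : eigenPairing q θ η = (θ - q 5) * (2 * θ - q 2) + q 4 * (η - q 3) := by
    simp [eigenPairing]; ring
  simp only [projCoordDeriv, projCoord]
  -- The value of the pairing matters only for the third and fifth components.
  generalize hp' : eigenPairingDeriv q q' θ θ' η η' = p'
  generalize eigenPairing q θ η = p at hp hp_eq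
  ext m
  fin_cases m <;>
    simp [flowVelocity, G, skewForm, vecMul, mulVec, dotProduct, Fin.sum_univ_six,
      hq₀, hq₁, hq₀', hq₁'] <;>
    field_simp <;> first | ring1 | (rw [← hp', eigenPairingDeriv, hp_eq]; ring1)

variable {q : ℝ → Fin 6 → ℝ} {θ η : ℝ → ℝ} {q' : Fin 6 → ℝ} {θ' η' t : ℝ}

theorem hasDerivAt_skewForm_projCoord (h : ∀ᶠ s in 𝓝 t, IsEigenpair (q s) (θ s) (η s))
    (hq : HasDerivAt q q' t) (hθ : HasDerivAt θ θ' t) (hη : HasDerivAt η η' t)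
    (hq4 : q t 4 ≠ 0) (hp : eigenPairing (q t) (θ t) (η t) ≠ 0) (hG : IsUnit (G (q t)).det)
    (i j : Fin 6) :
    HasDerivAt (fun s => skewForm (projCoord (q s) (θ s) (η s)) i j)
      (cUp i j (q t) ⬝ᵥ skewForm (projCoord (q t) (θ t) (η t)) *ᵥ q') t := by
  set z := projCoord (q t) (θ t) (η t)
  set z' := projCoordDeriv (q t) q' (θ t) θ' (η t) η'
  set y := flowVelocity (q t) q' z z'
  have hz := hasDerivAt_projCoord hq hθ hη hp
  have h' := isEigenpairTangent_of_hasDerivAt h hq hθ hη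
  let entry : (Fin 5 → ℝ) →ₗ[ℝ] ℝ := entryLinearMap ℝ ℝ i j ∘ₗ skewForm
  have hy : y = (skewForm z *ᵥ q') ᵥ* (G (q t))⁻¹ := by
    rw [← flowVelocity_vecMul_G h.self_of_nhds h' hq4 hp, vecMul_vecMul,
      mul_nonsing_inv _ hG, vecMul_one]
  have hz' : entry z' = y ⬝ᵥ fun p => cLow p i j (q t) := by
    rw [← flowVelocity_vecMul_symbolCoord q' z z' hq4, vecMul_eq_sum, map_sum]
    simp only [map_smul, smul_eq_mul, dotProduct, cLow_eq_skewForm]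
    rfl
  refine (entry.toContinuousLinearMap.hasFDerivAt.comp_hasDerivAt t hz).congr_deriv ?_
  change entry z' = _
  rw [hz', hy, ← dotProduct_mulVec, dotProduct_comm]
  rfl

end Flow

section FDeriv

variable {E : Type*} [NormedAddCommGroup E] [NormedSpace ℝ E] {q : E → Fin 6 → ℝ}
  {θ η : E → ℝ} {x : E}

theorem differentiableAt_skewForm_projCoord (hq : DifferentiableAt ℝ q x)
    (hθ : DifferentiableAt ℝ θ x) (hη : DifferentiableAt ℝ η x)
    (hp : eigenPairing (q x) (θ x) (η x) ≠ 0) (i j : Fin 6) :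
    DifferentiableAt ℝ (fun y => skewForm (projCoord (q y) (θ y) (η y)) i j) x := by
  let entry : (Fin 5 → ℝ) →ₗ[ℝ] ℝ := entryLinearMap ℝ ℝ i j ∘ₗ skewForm
  have hproj : DifferentiableAt ℝ (fun y => projCoord (q y) (θ y) (η y)) x := by
    refine DifferentiableAt.fun_smul (.fun_inv ?_ hp) (differentiableAt_pi.2 fun m => ?_)
    · simp only [eigenPairing, dotProduct, Fin.sum_univ_three, cons_val]
      fun_prop
    · fin_cases m <;> simp only [Fin.zero_eta, Fin.mk_one, Fin.reduceFinMk, cons_val,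
        cons_val_zero, cons_val_one] <;> fun_prop
  exact entry.toContinuousLinearMap.differentiableAt.comp x hproj

theorem fderiv_skewForm_projCoord (h : ∀ᶠ y in 𝓝 x, IsEigenpair (q y) (θ y) (η y))
    (hq : DifferentiableAt ℝ q x) (hθ : DifferentiableAt ℝ θ x) (hη : DifferentiableAt ℝ η x)
    (hq4 : q x 4 ≠ 0) (hp : eigenPairing (q x) (θ x) (η x) ≠ 0) (hG : IsUnit (G (q x)).det)
    (i j : Fin 6) (v : E) :
    fderiv ℝ (fun y => skewForm (projCoord (q y) (θ y) (η y)) i j) x v =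
      cUp i j (q x) ⬝ᵥ skewForm (projCoord (q x) (θ x) (η x)) *ᵥ fderiv ℝ q x v := by
  have hline : Tendsto (fun t : ℝ => x + t • v) (𝓝 0) (𝓝 x) :=
    Continuous.tendsto' (by fun_prop) _ _ (by simp)
  have key := hasDerivAt_skewForm_projCoord (q := fun t : ℝ => q (x + t • v)) (t := 0)
    (hline.eventually h) (hq.hasFDerivAt.hasLineDerivAt v) (hθ.hasFDerivAt.hasLineDerivAt v)
    (hη.hasFDerivAt.hasLineDerivAt v)
  simp only [zero_smul, add_zero] at key
  rw [← (differentiableAt_skewForm_projCoord hq hθ hη hp i j).lineDeriv_eq_fderiv]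
  exact (key hq4 hp hG i j).deriv

end FDeriv

section Coordinates

/-- The third component of the left eigenvector `(1, θ, η)` of `multMatrix q`, obtained by solving
the first equation of `isEigenpair_iff`. -/
noncomputable def eigenSlope (q : Fin 6 → ℝ) (θ : ℝ) : ℝ :=
  (θ ^ 2 - θ * q 2 - q 0) / q 4

variable {u : Fin 6 → ℝ}

theorem Δ_ne_zero_iff : Δ u ≠ 0 ↔ (u 0 ≠ u 1 ∧ u 0 ≠ u 2 ∧ u 1 ≠ u 2) ∧ u 4 ≠ 0 := by
  simp only [Δ, mul_ne_zero_iff, sub_ne_zero, and_assoc]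

theorem continuous_Δ : Continuous Δ := by
  unfold Δ
  fun_prop

theorem differentiableAt_phi (hu : u 4 ≠ 0) : DifferentiableAt ℝ phi u := by
  rw [differentiableAt_pi]
  intro i
  fin_cases i <;> simp only [phi, Fin.zero_eta, Fin.mk_one, Fin.reduceFinMk, cons_val,
    cons_val_zero, cons_val_one] <;>
    fun_prop (disch := simpa using hu)

theorem col_Jmat (hu : u 4 ≠ 0) (s : Fin 6) :
    (Jmat u).col s = fderiv ℝ phi u (Pi.single s 1) := by
  ext m
  exact DFunLike.congr_fun (hasFDerivAt_pi'.1 (differentiableAt_phi hu).hasFDerivAt m).fderiv _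

theorem isEigenpair_phi (hu : u 4 ≠ 0) {θ : ℝ} (hθ : (θ - u 0) * (θ - u 1) * (θ - u 2) = 0) :
    IsEigenpair (phi u) θ (eigenSlope (phi u) θ) := by
  rw [isEigenpair_iff]
  simp only [eigenSlope, phi, cons_val]
  constructor
  · field_simp; ring
  · field_simp; linear_combination (-16) * hθ

theorem eigenPairing_phi (hu : u 4 ≠ 0) (θ : ℝ) :
    eigenPairing (phi u) θ (eigenSlope (phi u) θ) =
      (θ - u 0) * (θ - u 1) + (θ - u 0) * (θ - u 2) + (θ - u 1) * (θ - u 2) := by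
  simp only [eigenPairing, eigenSlope, phi, dotProduct, Fin.sum_univ_three, cons_val]
  field_simp
  ring

theorem inv_Δ_smul_W1 (hΔ : Δ u ≠ 0) :
    (Δ u)⁻¹ • W1 u = skewForm (projCoord (phi u) (u 0) (eigenSlope (phi u) (u 0))) := by
  obtain ⟨⟨h01, h02, h12⟩, hu⟩ := Δ_ne_zero_iff.1 hΔ
  rw [← sub_ne_zero] at h01 h02 h12
  have hW : W1 u = skewForm ![W1 u 3 4, W1 u 2 4, W1 u 2 3, W1 u 0 2, W1 u 0 3] := rfl
  rw [hW, ← map_smul, projCoord, eigenPairing_phi hu]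
  congr 1
  ext m
  fin_cases m <;> simp [W1, Δ, eigenSlope, phi] <;> field_simp <;> ring

theorem inv_Δ_smul_W2 (hΔ : Δ u ≠ 0) :
    (Δ u)⁻¹ • W2 u = skewForm (projCoord (phi u) (u 1) (eigenSlope (phi u) (u 1))) := by
  obtain ⟨⟨h01, h02, h12⟩, hu⟩ := Δ_ne_zero_iff.1 hΔ
  have h10 := sub_ne_zero.2 h01.symm
  rw [← sub_ne_zero] at h01 h02 h12
  have hW : W2 u = skewForm ![W2 u 3 4, W2 u 2 4, W2 u 2 3, W2 u 0 2, W2 u 0 3] := rfl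
  rw [hW, ← map_smul, projCoord, eigenPairing_phi hu]
  congr 1
  ext m
  fin_cases m <;> simp [W2, Δ, eigenSlope, phi] <;> field_simp <;> ring

/-- The `skewForm` coordinates of the flow tensor `w_α` at `u`. The index `α.castAdd 4` selects the
coordinate `u^α` among the six. -/
noncomputable def flowCoord (α : Fin 2) (u : Fin 6 → ℝ) : Fin 5 → ℝ :=
  projCoord (phi u) (u (α.castAdd 4)) (eigenSlope (phi u) (u (α.castAdd 4)))

theorem inv_Δ_smul_Wmat (hΔ : Δ u ≠ 0) (α : Fin 2) :
    (Δ u)⁻¹ • Wmat α u = skewForm (flowCoord α u) := by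
  fin_cases α
  exacts [inv_Δ_smul_W1 hΔ, inv_Δ_smul_W2 hΔ]

theorem fderiv_skewForm_flowCoord (hΔ : Δ u ≠ 0) (hG : IsUnit (G (phi u)).det) (α : Fin 2)
    (i j : Fin 6) (v : Fin 6 → ℝ) :
    fderiv ℝ (fun x => skewForm (flowCoord α x) i j) u v =
      cUp i j (phi u) ⬝ᵥ skewForm (flowCoord α u) *ᵥ fderiv ℝ phi u v := by
  obtain ⟨⟨h01, h02, h12⟩, hu⟩ := Δ_ne_zero_iff.1 hΔ
  have hφ := differentiableAt_phi hu
  have hθ : DifferentiableAt ℝ (fun x : Fin 6 → ℝ => x (α.castAdd 4)) u := by fun_prop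
  have hη : DifferentiableAt ℝ (fun x => eigenSlope (phi x) (x (α.castAdd 4))) u := by
    unfold eigenSlope
    fun_prop (disch := exact hu)
  refine fderiv_skewForm_projCoord ?_ hφ hθ hη hu ?_ hG i j v
  · filter_upwards [(continuous_apply 4).continuousAt.eventually_ne hu] with x hx
    refine isEigenpair_phi hx ?_
    fin_cases α <;> simp
  · rw [eigenPairing_phi hu]
    fin_cases α <;> simp [sub_eq_zero, h01, h02, h12, h01.symm]

theorem pd_Wmat_apply_div_Δ (hΔ : Δ u ≠ 0) (hG : IsUnit (G (phi u)).det) (α : Fin 2)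
    (i j s : Fin 6) :
    pd s (fun x => Wmat α x i j / Δ x) u =
      cUp i j (phi u) ⬝ᵥ ((Δ u)⁻¹ • Wmat α u) *ᵥ (Jmat u).col s := by
  have hw_near : (fun x => Wmat α x i j / Δ x) =ᶠ[𝓝 u] fun x => skewForm (flowCoord α x) i j := by
    filter_upwards [continuous_Δ.continuousAt.eventually_ne hΔ] with x hx
    rw [← inv_Δ_smul_Wmat hx, Matrix.smul_apply, smul_eq_mul, inv_mul_eq_div]
  rw [pd, hw_near.fderiv_eq, fderiv_skewForm_flowCoord hΔ hG, inv_Δ_smul_Wmat hΔ,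
    col_Jmat (Δ_ne_zero_iff.1 hΔ).2]

end Coordinates

/-- the lowered commuting-flow tensors `w_{αij} = W_{αij}/Δ` satisfy
`w_{αij,l} − Σ_s c^s_{ij} w_{αsl} = 0`, where the `q`-derivative is computed through the
inverse Jacobian of the coordinate change `φ` and `c^s_{ij} = Σ_p g^{sp} c_{pij}(φ(u))`
with `g = G(φ(u))⁻¹`. -/
theorem statement14 :
    ∀ u : Fin 6 → ℝ,
      (u 0 ≠ u 1 ∧ u 0 ≠ u 2 ∧ u 1 ≠ u 2) → u 4 ≠ 0 →
      IsUnit (Jmat u).det → IsUnit (G (phi u)).det →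
      ∀ (α : Fin 2) (i j l : Fin 6),
        (∑ s, pd s (fun x => Wmat α x i j / Δ x) u * (Jmat u)⁻¹ s l)
          - ∑ s, (∑ p, (G (phi u))⁻¹ s p * cLow p i j (phi u)) * (Wmat α u s l / Δ u)
          = 0 := by
  intro u hdistinct hu hJ hG α i j l
  have hΔ := Δ_ne_zero_iff.2 ⟨hdistinct, hu⟩
  set w : Matrix (Fin 6) (Fin 6) ℝ := (Δ u)⁻¹ • Wmat α u
  have hpd : (fun s => pd s (fun x => Wmat α x i j / Δ x) u) = cUp i j (phi u) ᵥ* (w * Jmat u) := by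
    ext s
    rw [pd_Wmat_apply_div_Δ hΔ hG, dotProduct_mulVec, ← vecMul_vecMul]
    rfl
  have hcancel : (fun s => pd s (fun x => Wmat α x i j / Δ x) u) ᵥ* (Jmat u)⁻¹ =
      cUp i j (phi u) ᵥ* w := by
    rw [hpd, vecMul_vecMul, mul_nonsing_inv_cancel_right _ _ hJ]
  have hw (s : Fin 6) : Wmat α u s l / Δ u = w s l := div_eq_inv_mul _ _
  simp only [hw]
  exact sub_eq_zero.2 (congrFun hcancel l)
end

section
/- Let G(q) be the Monge metric of the Oriented Associativity equation, φ the coordinate change from u- to q-variables, Δ(u) = (u¹−u²)(u¹−u³)(u²−u³)u⁵, and w_{1ij}(u) = W_{1ij}(u)/Δ(u), w_{2ij}(u) = W_{2ij}(u)/Δ(u) the two explicit skew-symmetric matrices. On the open set of u ∈ ℝ⁶ where u¹, u², u³ are pairwise distinct, u⁵ ≠ 0 and G(φ(u)) is invertible, define g^{sp} := entries of G(φ(u))⁻¹, c_{pml}(q) := (1/3)(∂G_{lp}/∂q^m − ∂G_{mp}/∂q^l), and c^s_{ml} := Σ_p g^{sp} c_{pml}(φ(u)). Then for all indices n, m, l,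 k ∈ {1,…,6}: (∂c_{nml}/∂q^k)(φ(u)) + Σ_s c^s_{ml} c_{snk}(φ(u)) + 2·w_{1ml}(u)w_{1nk}(u) + w_{1ml}(u)w_{2nk}(u) + w_{2ml}(u)w_{1nk}(u) + 2·w_{2ml}(u)w_{2nk}(u) = 0. This is the integrability condition proving that the Oriented Associativity equation in hydrodynamic form admits the nonlocal third-order homogeneous Hamiltonian operator B = ∂_x(g^{ij}∂_x + c^{ij}_k u^k_x + 2 w^i_{1k}u^k_x ∂_x⁻¹ w^j_{1h}u^h_x + (w^i_{1k}u^k_x ∂_x⁻¹ w^j_{2h}u^h_x + w^i_{2k}u^k_x ∂_x⁻¹ w^j_{1h}u^h_x) + 2 w^i_{2k}u^k_x ∂_x⁻¹ w^j_{2h}u^h_x)∂_x with constants c¹ = 2, c² = 1, c³ = 2. -/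
/-!
The metric is a Gram matrix `G = Ψᵀ η Ψ`, where `η` is a constant symmetric form on `ℝ⁸` and the
eight rows of `Ψ` are covector fields `ωᵃᵢ + ∑ⱼ Nᵃᵢⱼ qʲ` with `Nᵃ` skew-symmetric. A cyclic
identity gives `c_{pij} = -∑ₐ (Ψᵀ η)_{pa} Nᵃᵢⱼ`, so that `∂ₖ c_{nml} = -⟨N_{ml}, N_{nk}⟩` in the
form `η`. The two columns of a matrix `Ξ` span the `η`-orthogonal complement of the columns of
`Ψ`, and the entries of `W₁`, `W₂` are the products `⟨Ξ_α, N_{ij}⟩`. The integrability condition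
is then Parseval's identity for the decomposition `ℝ⁸ = Im Ψ ⊕ Im Ξ`. The constants `2, 1, 2`
come from the inverse of the Gram matrix of `Ξ`, whose entries are values of the Hessian
covariant of the cubic `(X - u¹)(X - u²)(X - u³)` at its roots.
-/

open Matrix

lemma transpose_mul_apply_of_isSymm {R ι κ : Type*} [CommSemiring R] [Fintype ι]
    {η : Matrix ι ι R} (hη : η.IsSymm) (A : Matrix ι κ R) (i : κ) :
    (Aᵀ * η) i = η *ᵥ Aᵀ i := by
  rw [← vecMul_transpose, hη.eq]
  rfl

lemma mulVec_eval_apply {R ι κ m n : Type*} [CommSemiring R] [Fintype ι]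
    (A : Matrix κ ι R) (N : ι → Matrix m n R) (i : m) (j : n) (k : κ) :
    (A *ᵥ (N · i j)) k = (∑ a, A k a • N a) i j := by
  simp [Matrix.sum_apply, mulVec, dotProduct]

section Parseval

variable {R ι m κ : Type*} [CommRing R] [Fintype ι] [Fintype m] [Fintype κ]
  [DecidableEq m] [DecidableEq κ]
  {η : Matrix ι ι R} {Ψ : Matrix ι m R} {Ξ : Matrix ι κ R}

lemma resolution_of_orthogonal [DecidableEq ι]
    (hcard : Fintype.card ι = Fintype.card m + Fintype.card κ)
    (hΨ : IsUnit (Ψᵀ * η * Ψ).det) (hΞ : IsUnit (Ξᵀ * η * Ξ).det)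
    (hΨΞ : Ψᵀ * η * Ξ = 0) (hΞΨ : Ξᵀ * η * Ψ = 0) :
    (Ψ * (Ψᵀ * η * Ψ)⁻¹ * Ψᵀ + Ξ * (Ξᵀ * η * Ξ)⁻¹ * Ξᵀ) * η = 1 := by
  have hleft : fromRows ((Ψᵀ * η * Ψ)⁻¹ * (Ψᵀ * η)) ((Ξᵀ * η * Ξ)⁻¹ * (Ξᵀ * η)) *
      fromCols Ψ Ξ = 1 := by
    simp only [fromRows_mul_fromCols, Matrix.mul_assoc _ _ Ψ, Matrix.mul_assoc _ _ Ξ]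
    simp only [← Matrix.mul_assoc _ _ Ψ, ← Matrix.mul_assoc _ _ Ξ]
    simp only [Matrix.mul_assoc _⁻¹, hΨΞ, hΞΨ, nonsing_inv_mul _ hΨ, nonsing_inv_mul _ hΞ,
      Matrix.mul_zero, fromBlocks_one]
  have hcard' : Fintype.card (m ⊕ κ) = Fintype.card ι := by rw [Fintype.card_sum, hcard]
  have hright := (mul_eq_one_comm_of_card_eq _ _ _ hcard').mp hleft
  rw [fromCols_mul_fromRows] at hright
  simpa only [Matrix.add_mul, Matrix.mul_assoc] using hright

lemma parseval_of_orthogonal (hη : η.IsSymm)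
    (hcard : Fintype.card ι = Fintype.card m + Fintype.card κ)
    (hΨ : IsUnit (Ψᵀ * η * Ψ).det) (hΞ : IsUnit (Ξᵀ * η * Ξ).det)
    (hΨΞ : Ψᵀ * η * Ξ = 0) (a b : ι → R) :
    ((Ψᵀ * η * Ψ)⁻¹ *ᵥ ((Ψᵀ * η) *ᵥ a)) ⬝ᵥ ((Ψᵀ * η) *ᵥ b)
      + ((Ξᵀ * η * Ξ)⁻¹ *ᵥ ((Ξᵀ * η) *ᵥ a)) ⬝ᵥ ((Ξᵀ * η) *ᵥ b) = a ⬝ᵥ η *ᵥ b := by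
  classical
  have hΞΨ : Ξᵀ * η * Ψ = 0 := by
    simpa only [transpose_mul, transpose_transpose, hη.eq, transpose_zero, Matrix.mul_assoc]
      using congrArg transpose hΨΞ
  have hres : (Ψ * (Ψᵀ * η * Ψ)⁻¹ * Ψᵀ + Ξ * (Ξᵀ * η * Ξ)⁻¹ * Ξᵀ) *ᵥ (η *ᵥ a) = a := by
    rw [mulVec_mulVec, resolution_of_orthogonal hcard hΨ hΞ hΨΞ hΞΨ, one_mulVec]
  conv_rhs => rw [← hres]
  simp only [add_mulVec, add_dotProduct, ← mulVec_mulVec, dotProduct_mulVec _ (_ᵀ),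
    vecMul_transpose]

end Parseval

section AffineCovectors

variable {ι : Type*} (ω : Matrix ι (Fin 6) ℝ) (N : ι → Matrix (Fin 6) (Fin 6) ℝ)

/-- The family of covector fields on `ℝ⁶` with affine coefficients `ωᵃᵢ + ∑ⱼ Nᵃᵢⱼ qʲ`, stored as
a matrix with one row per covector. -/
def affineCovectors (q : Fin 6 → ℝ) : Matrix ι (Fin 6) ℝ :=
  of fun a i => ω a i + (N a *ᵥ q) i

lemma hasFDerivAt_affineCovectors (a : ι) (i : Fin 6) (q : Fin 6 → ℝ) :
    HasFDerivAt (fun x => affineCovectors ω N x a i)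
      ((ContinuousLinearMap.proj i).comp (N a).mulVecLin.toContinuousLinearMap) q :=
  ((ContinuousLinearMap.proj i).comp
    (N a).mulVecLin.toContinuousLinearMap).hasFDerivAt.const_add (ω a i)

variable {ω N}

lemma pd_dotProduct_affineCovectors [Fintype ι] (v : ι → ℝ) (k i : Fin 6) (q : Fin 6 → ℝ) :
    pd k (fun x => (affineCovectors ω N x)ᵀ i ⬝ᵥ v) q = (N · i k) ⬝ᵥ v := by
  have h := HasFDerivAt.fun_sum (u := Finset.univ) fun a _ =>
    (hasFDerivAt_affineCovectors ω N a i q).mul_const (v a)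
  simp only [pd, dotProduct, transpose_apply]
  rw [h.fderiv]
  simp [mul_comm]

lemma pd_gram_affineCovectors [Fintype ι] {η : Matrix ι ι ℝ} (hη : η.IsSymm)
    (k i j : Fin 6) (q : Fin 6 → ℝ) :
    pd k (fun x => ((affineCovectors ω N x)ᵀ * η * affineCovectors ω N x) i j) q
      = (((affineCovectors ω N q)ᵀ * η) *ᵥ (N · i k)) j
        + (((affineCovectors ω N q)ᵀ * η) *ᵥ (N · j k)) i := by
  have hsum (x) : ((affineCovectors ω N x)ᵀ * η * affineCovectors ω N x) i j =
      ∑ a, affineCovectors ω N x a i * ∑ b, η a b * affineCovectors ω N x b j := by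
    rw [Matrix.mul_assoc, mul_apply]
    rfl
  have h := HasFDerivAt.fun_sum (u := Finset.univ) fun a _ =>
    (hasFDerivAt_affineCovectors ω N a i q).fun_mul <| HasFDerivAt.fun_sum (u := Finset.univ)
      fun b _ => (hasFDerivAt_affineCovectors ω N b j q).const_mul (η a b)
  have hswap : (((affineCovectors ω N q)ᵀ * η) *ᵥ (N · i k)) j
      = (N · i k) ⬝ᵥ η *ᵥ (affineCovectors ω N q)ᵀ j := by
    rw [← mulVec_mulVec, dotProduct_mulVec, ← mulVec_transpose, hη.eq, dotProduct_comm]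
    rfl
  rw [hswap, ← mulVec_mulVec, add_comm]
  simp only [pd, hsum]
  rw [h.fderiv]
  simp [Finset.sum_add_distrib, mulVec, dotProduct, mul_comm]

lemma antisymm_pd_gram_affineCovectors [Fintype ι] {η : Matrix ι ι ℝ} (hη : η.IsSymm)
    (hN : ∀ a, (N a)ᵀ = -N a) {q : Fin 6 → ℝ}
    (hcyclic : ∀ i j k, (((affineCovectors ω N q)ᵀ * η) *ᵥ (N · i j)) k
      + (((affineCovectors ω N q)ᵀ * η) *ᵥ (N · j k)) i
      + (((affineCovectors ω N q)ᵀ * η) *ᵥ (N · k i)) j = 0) (p i j : Fin 6) :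
    (1 / 3) * (pd i (fun x => ((affineCovectors ω N x)ᵀ * η * affineCovectors ω N x) j p) q
        - pd j (fun x => ((affineCovectors ω N x)ᵀ * η * affineCovectors ω N x) i p) q)
      = -(((affineCovectors ω N q)ᵀ * η) *ᵥ (N · i j)) p := by
  have hskew (i j : Fin 6) : (N · i j) = -(N · j i) :=
    funext fun a => congrFun₂ (hN a) j i
  rw [pd_gram_affineCovectors hη, pd_gram_affineCovectors hη]
  have h := hcyclic j i p
  rw [hskew i p, hskew j i] at h
  rw [hskew j i]
  simp only [mulVec_neg, Pi.neg_apply] at h ⊢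
  linarith

end AffineCovectors

section Wedge

variable {n R : Type*} [DecidableEq n] [Ring R]

/-- The elementary skew-symmetric matrix `eᵢ ∧ eⱼ`. -/
def wedge (i j : n) : Matrix n n R := single i j 1 - single j i 1

lemma wedge_apply (i j k l : n) : (wedge i j : Matrix n n R) k l =
    (if i = k ∧ j = l then 1 else 0) - (if j = k ∧ i = l then 1 else 0) := by
  simp [wedge, single_apply]

lemma wedge_mulVec [Fintype n] (i j : n) (q : n → R) :
    wedge i j *ᵥ q = Pi.single i (q j) - Pi.single j (q i) := by
  simp [wedge, sub_mulVec, single_mulVec, Pi.single]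

lemma transpose_wedge (i j : n) : (wedge i j : Matrix n n R)ᵀ = -wedge i j := by
  simp [wedge]

end Wedge

/-- The constant parts `ωᵃᵢ` of the eight covectors that factor the Monge metric, one row per
covector. -/
def mongeConst : Matrix (Fin 8) (Fin 6) ℝ :=
  of ![Pi.single 2 1, 0, Pi.single 4 1, 0, 0, -Pi.single 1 1, Pi.single 0 1, 0]

/-- The linear coefficients `Nᵃᵢⱼ = ∂ψᵃᵢ/∂qʲ` of the eight covectors `ψᵃ` that factor the Monge
metric. -/
def mongeCurl : Fin 8 → Matrix (Fin 6) (Fin 6) ℝ :=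
  ![0, wedge 0 2 + wedge 1 4, 0, wedge 0 3 + wedge 1 5, wedge 2 4 + wedge 4 5,
    wedge 2 3 + wedge 3 5, 0, -wedge 3 4]

lemma transpose_mongeCurl (a : Fin 8) : (mongeCurl a)ᵀ = -mongeCurl a := by
  fin_cases a <;> simp [mongeCurl, transpose_wedge, add_comm]

/-- The eight covectors `ψᵃᵢ(q)` that factor the Monge metric, as the rows of a matrix. -/
abbrev mongeCovectors : (Fin 6 → ℝ) → Matrix (Fin 8) (Fin 6) ℝ :=
  affineCovectors mongeConst mongeCurl

lemma mongeCovectors_eq (q : Fin 6 → ℝ) : mongeCovectors q =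
    !![0, 0, 1, 0, 0, 0;
       q 2, q 4, -q 0, 0, -q 1, 0;
       0, 0, 0, 0, 1, 0;
       q 3, q 5, 0, -q 0, 0, -q 1;
       0, 0, q 4, 0, q 5 - q 2, -q 4;
       0, -1, q 3, q 5 - q 2, 0, -q 3;
       1, 0, 0, 0, 0, 0;
       0, 0, 0, -q 4, q 3, 0] := by
  ext a i
  fin_cases a <;> fin_cases i <;>
    simp [affineCovectors, mongeConst, mongeCurl, add_mulVec, neg_mulVec, wedge_mulVec,
      sub_eq_neg_add]

/-- The constant symmetric form `η` on `ℝ⁸` for which the Monge metric is the Gram matrix of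
`mongeCovectors`. -/
def mongeForm : Matrix (Fin 8) (Fin 8) ℝ :=
  !![0, 1, 0, 0, 0, 0, 0, 0;
     1, 0, 0, 0, 0, 0, 0, 0;
     0, 0, 0, 1, 0, 0, 0, 0;
     0, 0, 1, 0, 0, 0, 0, 0;
     0, 0, 0, 0, 0, -1, 0, 0;
     0, 0, 0, 0, -1, 0, 0, 0;
     0, 0, 0, 0, 0, 0, 2, 1;
     0, 0, 0, 0, 0, 0, 1, 2]

lemma mongeForm_isSymm : mongeForm.IsSymm := by
  ext i j
  fin_cases i <;> fin_cases j <;> rfl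

lemma mongeForm_mulVec (z : Fin 8 → ℝ) : mongeForm *ᵥ z =
    ![z 1, z 0, z 3, z 2, -z 5, -z 4, 2 * z 6 + z 7, z 6 + 2 * z 7] := by
  ext i
  fin_cases i <;> simp [mongeForm, mulVec, dotProduct, Fin.sum_univ_eight]

lemma dotProduct_mongeForm_mulVec (x y : Fin 8 → ℝ) : x ⬝ᵥ mongeForm *ᵥ y =
    x 0 * y 1 + x 1 * y 0 + x 2 * y 3 + x 3 * y 2 - x 4 * y 5 - x 5 * y 4
      + 2 * x 6 * y 6 + x 6 * y 7 + x 7 * y 6 + 2 * x 7 * y 7 := by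
  rw [mongeForm_mulVec, dotProduct, Fin.sum_univ_eight]
  simp only [cons_val]
  ring

lemma transpose_mongeCovectors_mul_mongeForm (q : Fin 6 → ℝ) :
    (mongeCovectors q)ᵀ * mongeForm =
    !![q 2, 0, q 3, 0, 0, 0, 2, 1;
       q 4, 0, q 5, 0, 1, 0, 0, 0;
       -q 0, 1, 0, 0, -q 3, -q 4, 0, 0;
       0, 0, -q 0, 0, q 2 - q 5, 0, -q 4, -2 * q 4;
       -q 1, 0, 0, 1, 0, q 2 - q 5, q 3, 2 * q 3;
       0, 0, -q 1, 0, q 3, q 4, 0, 0] := by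
  ext i b
  rw [transpose_mul_apply_of_isSymm mongeForm_isSymm, mongeForm_mulVec, mongeCovectors_eq]
  fin_cases i <;> fin_cases b <;> simp [mul_comm]

lemma sum_smul_mongeCurl (z : Fin 8 → ℝ) :
    ∑ a, z a • mongeCurl a =
    !![0, 0, z 1, z 3, 0, 0;
       0, 0, 0, 0, z 1, z 3;
       -z 1, 0, 0, z 5, z 4, 0;
       -z 3, 0, -z 5, 0, -z 7, z 5;
       0, -z 1, -z 4, z 7, 0, z 4;
       0, -z 3, 0, -z 5, -z 4, 0] := by
  simp only [Fin.sum_univ_eight, mongeCurl, cons_val]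
  ext i j
  fin_cases i <;> fin_cases j <;> simp [wedge_apply]

lemma G_eq_gram (q : Fin 6 → ℝ) :
    G q = (mongeCovectors q)ᵀ * mongeForm * mongeCovectors q := by
  rw [transpose_mongeCovectors_mul_mongeForm, mongeCovectors_eq]
  ext i j
  rw [mul_apply, Fin.sum_univ_eight]
  fin_cases i <;> fin_cases j <;> simp [G, -mul_eq_mul_left_iff, -mul_eq_mul_right_iff] <;> ring

lemma mulVec_mongeCurl_cyclic (q : Fin 6 → ℝ) (i j k : Fin 6) :
    (((mongeCovectors q)ᵀ * mongeForm) *ᵥ (mongeCurl · i j)) k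
      + (((mongeCovectors q)ᵀ * mongeForm) *ᵥ (mongeCurl · j k)) i
      + (((mongeCovectors q)ᵀ * mongeForm) *ᵥ (mongeCurl · k i)) j = 0 := by
  have hA := transpose_mongeCovectors_mul_mongeForm q
  generalize (mongeCovectors q)ᵀ * mongeForm = A at hA ⊢
  simp only [mulVec_eval_apply, sum_smul_mongeCurl]
  fin_cases i <;> fin_cases j <;> fin_cases k <;>
    simp only [Fin.zero_eta, Fin.mk_one, Fin.reduceFinMk, of_apply, cons_val] <;> simp [hA]

/-- The Hessian covariant of a cubic, polarised to a symmetric expression in two affine parameters.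
On the diagonal it is `-1/2` times the Hessian determinant of the associated binary cubic form. -/
def polarHessian {R : Type*} [CommRing R] (P : Cubic R) (s t : R) : R :=
  2 * (P.b ^ 2 - 3 * P.a * P.c) * s * t + (P.b * P.c - 9 * P.a * P.d) * (s + t)
    + 2 * (P.c ^ 2 - 3 * P.b * P.d)

open Polynomial in
lemma polarHessian_of_roots {R : Type*} [CommRing R] {P : Cubic R} {w x y z : R}
    (hP : P.toPoly = C w * (X - C x) * (X - C y) * (X - C z)) (s t : R) :
    polarHessian P s t = w ^ 2 * ((x - y) ^ 2 * (s - z) * (t - z)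
      + (x - z) ^ 2 * (s - y) * (t - y) + (y - z) ^ 2 * (s - x) * (t - x)) := by
  rw [Cubic.C_mul_prod_X_sub_C_eq] at hP
  rw [(Cubic.toPoly_injective P _).mp hP, polarHessian]
  ring

/-- The cubic whose Hessian covariant governs the products of the normals at `q`; at `q = φ(u)`
its roots are `u¹, u², u³`. -/
def mongeCubic (q : Fin 6 → ℝ) : Cubic ℝ :=
  ⟨1, -(q 2 + q 5), q 2 * q 5 - q 3 * q 4 - q 0, q 0 * q 5 - q 1 * q 4⟩

open Polynomial in
lemma mongeCubic_phi {u : Fin 6 → ℝ} (hu : u 4 ≠ 0) :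
    (mongeCubic (phi u)).toPoly = C 1 * (X - C (u 0)) * (X - C (u 1)) * (X - C (u 2)) := by
  rw [Cubic.C_mul_prod_X_sub_C_eq]
  congr 1
  simp only [mongeCubic, phi, cons_val, Cubic.mk.injEq, true_and]
  refine ⟨?_, ?_, ?_⟩ <;> field_simp <;> ring

/-- For a parameter `t`, a vector of `ℝ⁸` that is `mongeForm`-orthogonal to every column of
`mongeCovectors q`. It is affine in `t`, so varying `t` sweeps out the two-dimensional orthogonal
complement. -/
noncomputable def mongeNormal (q : Fin 6 → ℝ) (t : ℝ) : Fin 8 → ℝ :=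
  ![t - q 5, q 0 * (t - q 5) + q 1 * q 4, q 4, q 1 * (t - q 2) + q 0 * q 3, -(q 4 * t),
    q 1 + q 3 * t, (2 * (q 2 * q 5 - q 3 * q 4) + q 0 - (q 2 + q 5) * t) / 3,
    (q 3 * q 4 - q 2 * q 5 - 2 * q 0 + (2 * q 5 - q 2) * t) / 3]

lemma transpose_mongeCovectors_mul_mongeForm_mulVec_mongeNormal (q : Fin 6 → ℝ) (t : ℝ) :
    ((mongeCovectors q)ᵀ * mongeForm) *ᵥ mongeNormal q t = 0 := by
  rw [transpose_mongeCovectors_mul_mongeForm]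
  ext i
  rw [mulVec, dotProduct, Fin.sum_univ_eight]
  fin_cases i <;> simp [mongeNormal] <;> ring

lemma mongeNormal_dotProduct_mongeForm_mulVec (q : Fin 6 → ℝ) (s t : ℝ) :
    mongeNormal q s ⬝ᵥ mongeForm *ᵥ mongeNormal q t = polarHessian (mongeCubic q) s t / 3 := by
  rw [dotProduct_mongeForm_mulVec]
  simp only [mongeNormal, polarHessian, mongeCubic, cons_val]
  ring

lemma mongeForm_mulVec_mongeNormal (q : Fin 6 → ℝ) (t : ℝ) :
    mongeForm *ᵥ mongeNormal q t =
    ![q 0 * (t - q 5) + q 1 * q 4, t - q 5, q 1 * (t - q 2) + q 0 * q 3, q 4, -(q 1 + q 3 * t),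
      q 4 * t, q 2 * q 5 - q 3 * q 4 - q 2 * t, (q 5 - q 2) * t - q 0] := by
  rw [mongeForm_mulVec]
  ext i
  fin_cases i <;> simp [mongeNormal] <;> ring

lemma W1_eq {u : Fin 6 → ℝ} (hu : u 4 ≠ 0) :
    W1 u = ∑ a, (mongeForm *ᵥ ((u 1 - u 2) * u 4) • mongeNormal (phi u) (u 0)) a • mongeCurl a := by
  rw [sum_smul_mongeCurl, mulVec_smul, mongeForm_mulVec_mongeNormal]
  ext i j
  fin_cases i <;> fin_cases j <;> simp [W1, phi] <;> field_simp <;> ring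

lemma W2_eq {u : Fin 6 → ℝ} (hu : u 4 ≠ 0) :
    W2 u = ∑ a, (mongeForm *ᵥ ((u 2 - u 0) * u 4) • mongeNormal (phi u) (u 1)) a • mongeCurl a := by
  rw [sum_smul_mongeCurl, mulVec_smul, mongeForm_mulVec_mongeNormal]
  ext i j
  fin_cases i <;> fin_cases j <;> simp [W2, phi] <;> field_simp <;> ring

lemma cLow_eq (p i j : Fin 6) (q : Fin 6 → ℝ) :
    cLow p i j q = -(((mongeCovectors q)ᵀ * mongeForm) *ᵥ (mongeCurl · i j)) p := by
  simp only [cLow, G_eq_gram]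
  exact antisymm_pd_gram_affineCovectors mongeForm_isSymm transpose_mongeCurl
    (mulVec_mongeCurl_cyclic q) p i j

lemma pd_cLow (p i j k : Fin 6) (q : Fin 6 → ℝ) :
    pd k (cLow p i j) q = -((mongeCurl · p k) ⬝ᵥ mongeForm *ᵥ (mongeCurl · i j)) := by
  have hc : cLow p i j = fun x => (mongeCovectors x)ᵀ p ⬝ᵥ -(mongeForm *ᵥ (mongeCurl · i j)) := by
    ext x
    rw [cLow_eq, ← mulVec_mulVec, dotProduct_neg]
    rfl
  rw [hc, pd_dotProduct_affineCovectors, dotProduct_neg]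

/-- The normals at the roots `u¹` and `u²`, as columns. The weights make their products with
`mongeCurl` equal to `W₁` and `W₂`. -/
noncomputable def mongeNormals (u : Fin 6 → ℝ) : Matrix (Fin 8) (Fin 2) ℝ :=
  of fun a α => ![(u 1 - u 2) * u 4, (u 2 - u 0) * u 4] α * mongeNormal (phi u) (![u 0, u 1] α) a

lemma transpose_mongeNormals_apply (u : Fin 6 → ℝ) (α : Fin 2) :
    (mongeNormals u)ᵀ α
      = ![(u 1 - u 2) * u 4, (u 2 - u 0) * u 4] α • mongeNormal (phi u) (![u 0, u 1] α) :=
  rfl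

lemma transpose_mongeCovectors_mul_mongeForm_mul_mongeNormals (u : Fin 6 → ℝ) :
    (mongeCovectors (phi u))ᵀ * mongeForm * mongeNormals u = 0 := by
  ext i α
  trans (((mongeCovectors (phi u))ᵀ * mongeForm) *ᵥ (mongeNormals u)ᵀ α) i
  · rfl
  rw [transpose_mongeNormals_apply, mulVec_smul,
    transpose_mongeCovectors_mul_mongeForm_mulVec_mongeNormal, smul_zero]
  rfl

lemma transpose_mongeNormals_mul_mongeForm_mulVec_mongeCurl {u : Fin 6 → ℝ} (hu : u 4 ≠ 0)
    (i j : Fin 6) :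
    ((mongeNormals u)ᵀ * mongeForm) *ᵥ (mongeCurl · i j) = ![W1 u i j, W2 u i j] := by
  rw [W1_eq hu, W2_eq hu]
  ext α
  rw [mulVec_eval_apply, transpose_mul_apply_of_isSymm mongeForm_isSymm]
  fin_cases α <;> rfl

lemma gram_mongeNormals {u : Fin 6 → ℝ} (hu : u 4 ≠ 0) :
    (mongeNormals u)ᵀ * mongeForm * mongeNormals u = (Δ u ^ 2 / 3) • !![2, -1; -1, 2] := by
  ext α β
  trans (mongeNormals u)ᵀ α ⬝ᵥ mongeForm *ᵥ (mongeNormals u)ᵀ β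
  · rw [Matrix.mul_assoc]
    rfl
  fin_cases α <;> fin_cases β <;>
    simp [transpose_mongeNormals_apply, mulVec_smul, mongeNormal_dotProduct_mongeForm_mulVec,
      polarHessian_of_roots (mongeCubic_phi hu), Δ] <;> ring

lemma gram_mongeNormals_mul_inv {u : Fin 6 → ℝ} (hu : u 4 ≠ 0) (hΔ : Δ u ≠ 0) :
    (mongeNormals u)ᵀ * mongeForm * mongeNormals u * ((Δ u ^ 2)⁻¹ • !![2, 1; 1, 2]) = 1 := by
  rw [gram_mongeNormals hu, smul_mul_smul_comm, one_fin_two]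
  have hscale : Δ u ^ 2 / 3 * (Δ u ^ 2)⁻¹ = 1 / 3 := by field_simp
  rw [hscale]
  norm_num [← Matrix.ext_iff, Fin.forall_fin_two]

lemma inv_gram_mongeNormals_dotProduct {u : Fin 6 → ℝ} (hu : u 4 ≠ 0) (hΔ : Δ u ≠ 0)
    (i j i' j' : Fin 6) :
    (((mongeNormals u)ᵀ * mongeForm * mongeNormals u)⁻¹ *ᵥ
        (((mongeNormals u)ᵀ * mongeForm) *ᵥ (mongeCurl · i j)))
        ⬝ᵥ (((mongeNormals u)ᵀ * mongeForm) *ᵥ (mongeCurl · i' j'))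
      = 2 * (W1 u i j / Δ u) * (W1 u i' j' / Δ u) + (W1 u i j / Δ u) * (W2 u i' j' / Δ u)
        + (W2 u i j / Δ u) * (W1 u i' j' / Δ u)
        + 2 * (W2 u i j / Δ u) * (W2 u i' j' / Δ u) := by
  simp only [transpose_mongeNormals_mul_mongeForm_mulVec_mongeCurl hu,
    inv_eq_right_inv (gram_mongeNormals_mul_inv hu hΔ), smul_mulVec, smul_dotProduct]
  simp only [mulVec, dotProduct, Fin.sum_univ_two, of_apply, cons_val_zero, cons_val_one,
    smul_eq_mul]
  ring

/-- the integrability condition with nonlocal tail for the Monge metric of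
the Oriented Associativity equation: `c_{nml,k} + c^s_{ml}c_{snk} + c^α w_{αml}w_{αnk} = 0`
with constants `c¹ = 2, c² = 1, c³ = 2`, where `w_{αij} = W_{αij}/Δ` and everything is
evaluated at `q = φ(u)`. This proves that the equation admits the nonlocal third-order
homogeneous Hamiltonian operator of the paper. -/
theorem statement15 :
    ∀ u : Fin 6 → ℝ,
      (u 0 ≠ u 1 ∧ u 0 ≠ u 2 ∧ u 1 ≠ u 2) → u 4 ≠ 0 →
      IsUnit (G (phi u)).det →
      ∀ n m l k : Fin 6,
        pd k (fun x => cLow n m l x) (phi u)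
          + ∑ s, (∑ p, (G (phi u))⁻¹ s p * cLow p m l (phi u)) * cLow s n k (phi u)
          + 2 * (W1 u m l / Δ u) * (W1 u n k / Δ u)
          + (W1 u m l / Δ u) * (W2 u n k / Δ u)
          + (W2 u m l / Δ u) * (W1 u n k / Δ u)
          + 2 * (W2 u m l / Δ u) * (W2 u n k / Δ u) = 0 := by
  rintro u ⟨h01, h02, h12⟩ h4 hG n m l k
  have hΔ : Δ u ≠ 0 := by simp [Δ, sub_ne_zero, h01, h02, h12, h4]
  have hpd : pd k (fun x => cLow n m l x) (phi u)
      = -((mongeCurl · m l) ⬝ᵥ mongeForm *ᵥ (mongeCurl · n k)) := by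
    rw [pd_cLow, dotProduct_mulVec, ← mulVec_transpose, mongeForm_isSymm.eq, dotProduct_comm]
  have hc : ∑ s, (∑ p, (G (phi u))⁻¹ s p * cLow p m l (phi u)) * cLow s n k (phi u)
      = ((G (phi u))⁻¹ *ᵥ (((mongeCovectors (phi u))ᵀ * mongeForm) *ᵥ (mongeCurl · m l)))
        ⬝ᵥ (((mongeCovectors (phi u))ᵀ * mongeForm) *ᵥ (mongeCurl · n k)) := by
    simp [cLow_eq, mulVec, dotProduct]
  rw [G_eq_gram] at hG hc
  have hparseval := parseval_of_orthogonal mongeForm_isSymm rfl hG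
    (isUnit_det_of_right_inverse <| gram_mongeNormals_mul_inv h4 hΔ)
    (transpose_mongeCovectors_mul_mongeForm_mul_mongeNormals u) (mongeCurl · m l) (mongeCurl · n k)
  rw [inv_gram_mongeNormals_dotProduct h4 hΔ] at hparseval
  rw [G_eq_gram, hpd, hc]
  linear_combination hparseval
end
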